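/- Let G be a finite simple bipartite graph with bipartition classes U and V, and let a_1,…,a_n, b_n,…,b_1 be distinct vertices with A = {a_1,…,a_n} ⊆ V and B = {b_1,…,b_n} ⊆ U, such that G is noncrossing with respect to the cyclic sequence (a_1,…,a_n, b_n,…,b_1). For 1 ≤ i,j ≤ n let L_{ij} = G−{a_i, b_j}. If G has exactly one perfect matching, then M(G−A−B) = det[M(L_{ij})]_{1≤i,j≤n}. -/

import Mathlib

/-- A perfect matching of the induced subgraph of `G` on the vertex set `s`,
represented as a set `m` of edges of `G`: every edge of `m` is an edge of `G`
with both endpoints in `s`, and every vertex of `s` lies in exactly one edge of `m`. -/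
def IsPMOn {α : Type*} (G : SimpleGraph α) (s : Finset α) (m : Finset (Sym2 α)) : Prop :=
  (∀ e ∈ m, e ∈ G.edgeSet ∧ ∀ v ∈ e, v ∈ s) ∧ ∀ v ∈ s, ∃! e, e ∈ m ∧ v ∈ e

/-- The number of perfect matchings of the induced subgraph of `G` on `s`. -/
noncomputable def pmCount {α : Type*} (G : SimpleGraph α) (s : Finset α) : ℕ :=
  Nat.card {m : Finset (Sym2 α) // IsPMOn G s m}

open Classical in
/-- The sum, over all perfect matchings of the induced subgraph of `G` on `s`,
of the product of the weights of the edges of the matching. -/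
noncomputable def pmSum {α R : Type*} [Fintype α] [DecidableEq α] [CommRing R]
    (G : SimpleGraph α) (w : Sym2 α → R) (s : Finset α) : R :=
  ∑ m ∈ Finset.univ.filter (fun m : Finset (Sym2 α) => IsPMOn G s m), ∏ e ∈ m, w e

/-- There are two vertex-disjoint paths in `G`, one joining `x₁` to `y₁` and one joining
`x₂` to `y₂`, whose internal vertices avoid `S`. -/
def DisjointPaths {α : Type*} (G : SimpleGraph α) (S : Set α) (x₁ y₁ x₂ y₂ : α) : Prop :=
  ∃ (p : G.Walk x₁ y₁) (q : G.Walk x₂ y₂), p.IsPath ∧ q.IsPath ∧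
    (∀ u ∈ p.support, u ∉ q.support) ∧
    (∀ u ∈ p.support, u ≠ x₁ → u ≠ y₁ → u ∉ S) ∧
    (∀ u ∈ q.support, u ≠ x₂ → u ≠ y₂ → u ∉ S)

/-- `G` is noncrossing with respect to the cyclic sequence given by the list `L`:
there are no indices `i < j < k < l` such that `G` contains two vertex-disjoint paths,
one joining `L[i]` to `L[k]` and one joining `L[j]` to `L[l]`, whose internal vertices
avoid the vertices of `L`. -/
def NoncrossingList {α : Type*} (G : SimpleGraph α) (L : List α) : Prop :=
  ∀ i j k l : Fin L.length, i < j → j < k → k < l →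
    ¬ DisjointPaths G {x | x ∈ L} (L.get i) (L.get k) (L.get j) (L.get l)

/-- `U, W` form a bipartition of the vertices of `G`. -/
def IsBipartition {α : Type*} [Fintype α] [DecidableEq α]
    (G : SimpleGraph α) (U W : Finset α) : Prop :=
  Disjoint U W ∧ U ∪ W = Finset.univ ∧
    ∀ ⦃x y⦄, G.Adj x y → ((x ∈ U ∧ y ∈ W) ∨ (x ∈ W ∧ y ∈ U))

/-- `P` is an `MH`-alternating path, where `MH` is the unique perfect matching of the
induced subgraph of `G` on the vertex set `sH`: `P` is a (nontrivial) path, among any two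
consecutive edges of `P` exactly one lies in `MH`, and for each endpoint the incident edge
of `P` lies in `MH` iff the endpoint belongs to `sH`. -/
def IsAltPath {α : Type*} (G : SimpleGraph α) (sH : Finset α) (MH : Finset (Sym2 α))
    {x y : α} (P : G.Walk x y) : Prop :=
  P.IsPath ∧ P.edges ≠ [] ∧
  P.edges.Chain' (fun e f => e ∈ MH ↔ f ∉ MH) ∧
  (∀ e ∈ P.edges.head?, (e ∈ MH ↔ x ∈ sH)) ∧
  (∀ e ∈ P.edges.getLast?, (e ∈ MH ↔ y ∈ sH))

/-- A family of pairwise vertex-disjoint `MH`-alternating paths in `G` whose set of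
path-endpoints is exactly `A`, each vertex of `A` being an endpoint of exactly one
path of the family. -/
def IsAltPathNest {α : Type*} (G : SimpleGraph α) (sH : Finset α) (MH : Finset (Sym2 α))
    (A : Finset α) (F : Finset (Σ x : α, Σ y : α, G.Walk x y)) : Prop :=
  (∀ p ∈ F, IsAltPath G sH MH p.2.2) ∧
  (∀ p ∈ F, ∀ q ∈ F, p ≠ q → ∀ u ∈ p.2.2.support, u ∉ q.2.2.support) ∧
  (∀ p ∈ F, p.1 ∈ A ∧ p.2.1 ∈ A) ∧
  (∀ v ∈ A, ∃! p, p ∈ F ∧ (v = p.1 ∨ v = p.2.1))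

/-- A 1-factor on `{1, …, n}`: a partition of `Fin n` into pairs, each pair recorded
as an ordered pair `(i, j)` with `i < j`. -/
def IsOneFactor (n : ℕ) (F : Finset (Fin n × Fin n)) : Prop :=
  (∀ p ∈ F, p.1 < p.2) ∧ ∀ v : Fin n, ∃! p, p ∈ F ∧ (v = p.1 ∨ v = p.2)

/-- The crossing number of a 1-factor: the number of pairs of pairs
`(i,j), (k,l)` in `F` with `i < k < j < l`. -/
def crossingNumber (n : ℕ) (F : Finset (Fin n × Fin n)) : ℕ :=
  ((F ×ˢ F).filter (fun q => q.1.1 < q.2.1 ∧ q.2.1 < q.1.2 ∧ q.1.2 < q.2.2)).card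

/-!
Let `m₀` be the unique perfect matching, and write `row x ∈ U` and `col x ∈ V` for the ends of its
edge `x`, so that `a i = col (s i)` and `b j = row (t j)` for some `s` and `t`. Put an arrow from
`x` to `y` when `row x` is adjacent to `col y`. Uniqueness of `m₀` says that these arrows form no
cycle other than loops.

A perfect matching of `G - A - B` is a bijection from `{x | x ∉ range t}` to `{x | x ∉ range s}`
following arrows. Adding one extra point for each index `i`, inserted between the sink `t i` and the
source `s i`, turns it into a permutation (a *routing*) of edges and extra points. Hence the number
of such matchings is, up to the signs of the routings, the determinant of the arrow matrix bordered
by indicator columns and rows. Every nontrivial cycle of a routing runs through an extra point, and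
along it one reads off alternating paths joining `a i` to `b (σ i)`. As these do not cross, `σ` is
the identity, so each cycle contains exactly one extra point, and every routing contributes `1`.
Finally, the Schur complement writes the bordered determinant as the determinant of the
`(s i, t j)`-entries of the inverse of the arrow matrix, and the case of a single source and a
single sink identifies these entries.
-/

open Equiv Function

section PerfectMatchings

variable {α : Type*} {G : SimpleGraph α} {S : Finset α}

theorem pmCount_eq_one_iff : pmCount G S = 1 ↔ ∃! m, IsPMOn G S m := by
  rw [pmCount, Nat.card_eq_one_iff_unique, ← unique_iff_subsingleton_and_nonempty,
    unique_subtype_iff_existsUnique]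

namespace IsPMOn

variable {m m' : Finset (Sym2 α)} {u v w : α}

theorem eq_of_mem_of_mem (hm : IsPMOn G S m) (hv : s(u, v) ∈ m) (hw : s(u, w) ∈ m) : v = w := by
  have hu : u ∈ S := (hm.1 _ hv).2 u (Sym2.mem_mk_left u v)
  exact Sym2.congr_right.1 <|
    (hm.2 u hu).unique ⟨hv, Sym2.mem_mk_left u v⟩ ⟨hw, Sym2.mem_mk_left u w⟩

theorem eq_of_subset (hm : IsPMOn G S m) (hm' : IsPMOn G S m') (h : m ⊆ m') : m = m' := by
  refine h.antisymm fun e he => ?_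
  induction e using Sym2.ind with
  | _ v w =>
    have hv : v ∈ S := (hm'.1 _ he).2 v (Sym2.mem_mk_left v w)
    obtain ⟨e, ⟨he_mem, hve⟩, -⟩ := hm.2 v hv
    rwa [(hm'.2 v hv).unique ⟨he, Sym2.mem_mk_left v w⟩ ⟨h he_mem, hve⟩]

end IsPMOn

/-- The induced subgraph of `G` on `S` is bipartite, and its colour classes are labelled
injectively by `row` and `col`. Labelling the classes by types, rather than recording them as
finsets, turns perfect matchings into equivalences of label types. -/
structure IsBipartiteLabelling {P Q : Type*} (G : SimpleGraph α) (S : Finset α)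
    (row : P → α) (col : Q → α) : Prop where
  row_injective : Injective row
  col_injective : Injective col
  row_ne_col : ∀ x y, row x ≠ col y
  mem_iff : ∀ v, v ∈ S ↔ v ∈ Set.range row ∨ v ∈ Set.range col
  not_adj_row : ∀ x x', ¬ G.Adj (row x) (row x')
  not_adj_col : ∀ y y', ¬ G.Adj (col y) (col y')

/-- The matching encoded by an equivalence of labels: the edges joining `row x` to `col (f x)`. -/
def matchingOfEquiv {P Q : Type*} [Fintype P] [DecidableEq α] (row : P → α) (col : Q → α)
    (f : P ≃ Q) : Finset (Sym2 α) :=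
  Finset.univ.image fun x => s(row x, col (f x))

theorem mem_matchingOfEquiv {P Q : Type*} [Fintype P] [DecidableEq α] {row : P → α} {col : Q → α}
    {f : P ≃ Q} {e : Sym2 α} :
    e ∈ matchingOfEquiv row col f ↔ ∃ x, s(row x, col (f x)) = e := by
  simp [matchingOfEquiv]

namespace IsBipartiteLabelling

variable {P Q : Type*} {row : P → α} {col : Q → α} {m : Finset (Sym2 α)}

theorem symm (h : IsBipartiteLabelling G S row col) : IsBipartiteLabelling G S col row where
  row_injective := h.col_injective
  col_injective := h.row_injective
  row_ne_col x y := (h.row_ne_col y x).symm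
  mem_iff v := (h.mem_iff v).trans or_comm
  not_adj_row := h.not_adj_col
  not_adj_col := h.not_adj_row

theorem comp_col (h : IsBipartiteLabelling G S row col) {Q' : Type*} (f : Q' ≃ Q) :
    IsBipartiteLabelling G S row (col ∘ f) where
  row_injective := h.row_injective
  col_injective := h.col_injective.comp f.injective
  row_ne_col x y := h.row_ne_col x (f y)
  mem_iff v := by rw [f.surjective.range_comp, h.mem_iff]
  not_adj_row := h.not_adj_row
  not_adj_col y y' := h.not_adj_col (f y) (f y')

theorem row_mem (h : IsBipartiteLabelling G S row col) (x : P) : row x ∈ S :=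
  (h.mem_iff _).2 (.inl ⟨x, rfl⟩)

theorem finite_rowLabels (h : IsBipartiteLabelling G S row col) : Finite P :=
  Finite.of_injective (fun x => (⟨row x, h.row_mem x⟩ : S)) fun _ _ hxy =>
    h.row_injective (congrArg Subtype.val hxy)

theorem row_mem_mk_iff (h : IsBipartiteLabelling G S row col) {x x' : P} {y : Q} :
    row x ∈ s(row x', col y) ↔ x = x' := by
  simp [Sym2.mem_iff, h.row_ne_col, h.row_injective.eq_iff]

theorem col_mem_mk_iff (h : IsBipartiteLabelling G S row col) {x : P} {y y' : Q} :
    col y ∈ s(row x, col y') ↔ y = y' := by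
  rw [Sym2.eq_swap, h.symm.row_mem_mk_iff]

theorem exists_mk_mem (h : IsBipartiteLabelling G S row col) (hm : IsPMOn G S m) (x : P) :
    ∃ y, s(row x, col y) ∈ m := by
  obtain ⟨e, ⟨he, hxe⟩, -⟩ := hm.2 (row x) (h.row_mem x)
  obtain ⟨w, rfl⟩ := Sym2.mem_iff_exists.1 hxe
  obtain ⟨hadj, hS⟩ := hm.1 _ he
  rcases (h.mem_iff w).1 (hS w (Sym2.mem_mk_right _ w)) with ⟨x', rfl⟩ | ⟨y, rfl⟩
  · exact absurd hadj (h.not_adj_row x x')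
  · exact ⟨y, he⟩

theorem sdiff_image (h : IsBipartiteLabelling G S row col) [DecidableEq α] {I : Type*}
    [Fintype I] (s : I → Q) (t : I → P) :
    IsBipartiteLabelling G (S \ (Finset.univ.image (col ∘ s) ∪ Finset.univ.image (row ∘ t)))
      (fun x : {x // x ∉ Set.range t} => row x) (fun y : {y // y ∉ Set.range s} => col y) where
  row_injective := h.row_injective.comp Subtype.val_injective
  col_injective := h.col_injective.comp Subtype.val_injective
  row_ne_col x y := h.row_ne_col x y
  mem_iff v := by
    simp only [Finset.mem_sdiff, h.mem_iff, Finset.mem_union, Finset.mem_image, Finset.mem_univ,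
      true_and, comp_apply, Set.mem_range, Subtype.exists, exists_prop]
    constructor
    · rintro ⟨⟨x, rfl⟩ | ⟨y, rfl⟩, hv⟩
      · exact .inl ⟨x, fun ⟨j, hj⟩ => hv (.inr ⟨j, by rw [hj]⟩), rfl⟩
      · exact .inr ⟨y, fun ⟨i, hi⟩ => hv (.inl ⟨i, by rw [hi]⟩), rfl⟩
    · rintro (⟨x, hx, rfl⟩ | ⟨y, hy, rfl⟩)
      · simpa [(h.row_ne_col _ _).symm, h.row_injective.eq_iff] using hx
      · simpa [h.row_ne_col, h.col_injective.eq_iff] using hy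
  not_adj_row x x' := h.not_adj_row x x'
  not_adj_col y y' := h.not_adj_col y y'

section MatchingOfEquiv

variable [Fintype P] [DecidableEq α]

theorem isPMOn_matchingOfEquiv (h : IsBipartiteLabelling G S row col) {f : P ≃ Q}
    (hf : ∀ x, G.Adj (row x) (col (f x))) : IsPMOn G S (matchingOfEquiv row col f) := by
  simp only [IsPMOn, mem_matchingOfEquiv]
  refine ⟨?_, fun v hv => ?_⟩
  · rintro _ ⟨x, rfl⟩
    refine ⟨hf x, fun v hv => ?_⟩
    rcases Sym2.mem_iff.1 hv with rfl | rfl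
    exacts [h.row_mem x, h.symm.row_mem (f x)]
  · rcases (h.mem_iff v).1 hv with ⟨x, rfl⟩ | ⟨y, rfl⟩
    · refine ⟨_, ⟨⟨x, rfl⟩, Sym2.mem_mk_left _ _⟩, ?_⟩
      rintro _ ⟨⟨x', rfl⟩, hx⟩
      rw [h.row_mem_mk_iff.1 hx]
    · refine ⟨_, ⟨⟨f.symm y, rfl⟩, by simp⟩, ?_⟩
      rintro _ ⟨⟨x, rfl⟩, hy⟩
      rw [h.col_mem_mk_iff.1 hy, f.symm_apply_apply]

theorem matchingOfEquiv_injective (h : IsBipartiteLabelling G S row col) :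
    Injective (matchingOfEquiv row col) := by
  intro f g hfg
  ext1 x
  obtain ⟨x', hx'⟩ := mem_matchingOfEquiv.1 (hfg ▸ mem_matchingOfEquiv.2 ⟨x, rfl⟩ :
    s(row x, col (f x)) ∈ matchingOfEquiv row col g)
  have hx : x = x' := h.row_mem_mk_iff.1 (hx'.symm ▸ Sym2.mem_mk_left _ _)
  subst hx
  exact (h.col_injective (Sym2.congr_right.1 hx')).symm

theorem exists_matchingOfEquiv_eq (h : IsBipartiteLabelling G S row col) (hm : IsPMOn G S m) :
    ∃ f : P ≃ Q, (∀ x, G.Adj (row x) (col (f x))) ∧ matchingOfEquiv row col f = m := by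
  choose g hg using h.exists_mk_mem hm
  choose k hk using h.symm.exists_mk_mem hm
  let f : P ≃ Q :=
    { toFun := g
      invFun := k
      left_inv x := h.row_injective (hm.eq_of_mem_of_mem (hk (g x)) (Sym2.eq_swap ▸ hg x))
      right_inv y := h.col_injective (hm.eq_of_mem_of_mem (hg (k y)) (Sym2.eq_swap ▸ hk y)) }
  have hf : ∀ x, G.Adj (row x) (col (f x)) := fun x => (hm.1 _ (hg x)).1
  refine ⟨f, hf, (h.isPMOn_matchingOfEquiv hf).eq_of_subset hm fun e he => ?_⟩
  obtain ⟨x, rfl⟩ := mem_matchingOfEquiv.1 he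
  exact hg x

end MatchingOfEquiv

theorem pmCount_eq_card_equiv (h : IsBipartiteLabelling G S row col) :
    pmCount G S = Nat.card {f : P ≃ Q // ∀ x, G.Adj (row x) (col (f x))} := by
  classical
  have := h.finite_rowLabels
  have := Fintype.ofFinite P
  refine (Nat.card_eq_of_bijective (fun f => (⟨matchingOfEquiv row col f.1,
    h.isPMOn_matchingOfEquiv f.2⟩ : {m // IsPMOn G S m})) ⟨fun f g hfg => ?_, ?_⟩).symm
  · exact Subtype.ext (h.matchingOfEquiv_injective (congrArg Subtype.val hfg))
  · rintro ⟨m, hm⟩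
    obtain ⟨f, hf, rfl⟩ := h.exists_matchingOfEquiv_eq hm
    exact ⟨⟨f, hf⟩, rfl⟩

end IsBipartiteLabelling

end PerfectMatchings

section Routings

variable {X I : Type*} {r : X → X → Prop} {s t : I → X}

/-- The moves allowed in a routing: follow an arrow of `r`, or go from the sink `t j` to the extra
point `j`, or from the extra point `i` to the source `s i`. -/
def RoutingStep (r : X → X → Prop) (s t : I → X) : X ⊕ I → X ⊕ I → Prop
  | .inl x, .inl y => r x y
  | .inl x, .inr j => x = t j
  | .inr i, .inl y => y = s i
  | .inr _, .inr _ => False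

/-- A routing: a permutation all of whose steps are allowed. It encodes a family of vertex-disjoint
`r`-paths from the sources `s` to the sinks `t`, together with `r`-cycles covering the remaining
points; the extra points close the paths up to cycles. -/
def IsRouting (r : X → X → Prop) (s t : I → X) (τ : Perm (X ⊕ I)) : Prop :=
  ∀ z, RoutingStep r s t z (τ z)

namespace IsRouting

variable {τ : Perm (X ⊕ I)}

theorem apply_inr (hτ : IsRouting r s t τ) (i : I) : τ (.inr i) = .inl (s i) := by
  have h := hτ (.inr i)
  cases hi : τ (.inr i) <;> simp_all [RoutingStep]

theorem rel_of_apply_inl (hτ : IsRouting r s t τ) {x y : X} (h : τ (.inl x) = .inl y) :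
    r x y := by
  simpa [h, RoutingStep] using hτ (.inl x)

theorem eq_sink_of_apply_inl (hτ : IsRouting r s t τ) {x : X} {j : I}
    (h : τ (.inl x) = .inr j) : x = t j := by
  simpa [h, RoutingStep] using hτ (.inl x)

theorem apply_sink (hτ : IsRouting r s t τ) (j : I) : τ (.inl (t j)) = .inr j := by
  obtain ⟨x | i, hz⟩ := τ.surjective (.inr j)
  · rw [← hτ.eq_sink_of_apply_inl hz, hz]
  · simp [hτ.apply_inr] at hz

theorem exists_equiv (hτ : IsRouting r s t τ) :
    ∃ f : {x // x ∉ Set.range t} ≃ {y // y ∉ Set.range s},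
      ∀ x, τ (.inl x.1) = .inl (f x).1 := by
  have forward (x : {x // x ∉ Set.range t}) :
      ∃ y : {y // y ∉ Set.range s}, τ (.inl x.1) = .inl y.1 := by
    rcases hx : τ (.inl x.1) with y | j
    · refine ⟨⟨y, ?_⟩, rfl⟩
      rintro ⟨i, rfl⟩
      cases τ.injective (hx.trans (hτ.apply_inr i).symm)
    · exact absurd ⟨j, (hτ.eq_sink_of_apply_inl hx).symm⟩ x.2
  have backward (y : {y // y ∉ Set.range s}) :
      ∃ x : {x // x ∉ Set.range t}, τ (.inl x.1) = .inl y.1 := by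
    obtain ⟨x | i, hz⟩ := τ.surjective (.inl y.1)
    · refine ⟨⟨x, ?_⟩, hz⟩
      rintro ⟨j, rfl⟩
      cases (hτ.apply_sink j).symm.trans hz
    · exact absurd ⟨i, Sum.inl.inj ((hτ.apply_inr i).symm.trans hz)⟩ y.2
  choose g hg using forward
  choose k hk using backward
  refine ⟨⟨g, k, fun x => ?_, fun y => ?_⟩, hg⟩
  · exact Subtype.ext (Sum.inl.inj (τ.injective ((hk (g x)).trans (hg x).symm)))
  · exact Subtype.ext (Sum.inl.inj ((hg (k y)).symm.trans (hk y)))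

end IsRouting

open Classical in
/-- The splitting of the codomain of an injection into its range and the complement. -/
noncomputable def sumNotMemRangeEquiv (hs : Injective s) : I ⊕ {x // x ∉ Set.range s} ≃ X :=
  ((Equiv.ofInjective s hs).sumCongr (Equiv.refl _)).trans (Equiv.sumCompl (· ∈ Set.range s))

/-- The routing that agrees with `f` off the sinks. -/
noncomputable def routingOfEquiv (hs : Injective s) (ht : Injective t)
    (f : {x // x ∉ Set.range t} ≃ {y // y ∉ Set.range s}) : Perm (X ⊕ I) :=
  calc X ⊕ I
    _ ≃ (I ⊕ {x // x ∉ Set.range t}) ⊕ I := (sumNotMemRangeEquiv ht).symm.sumCongr (Equiv.refl I)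
    _ ≃ I ⊕ ({x // x ∉ Set.range t} ⊕ I) := Equiv.sumAssoc _ _ _
    _ ≃ ({x // x ∉ Set.range t} ⊕ I) ⊕ I := Equiv.sumComm _ _
    _ ≃ (I ⊕ {y // y ∉ Set.range s}) ⊕ I :=
      ((Equiv.sumComm _ _).trans ((Equiv.refl I).sumCongr f)).sumCongr (Equiv.refl I)
    _ ≃ X ⊕ I := (sumNotMemRangeEquiv hs).sumCongr (Equiv.refl I)

section RoutingOfEquiv

variable (hs : Injective s) (ht : Injective t)
  (f : {x // x ∉ Set.range t} ≃ {y // y ∉ Set.range s})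

theorem routingOfEquiv_inr (i : I) : routingOfEquiv hs ht f (.inr i) = .inl (s i) := rfl

theorem routingOfEquiv_sink (j : I) : routingOfEquiv hs ht f (.inl (t j)) = .inr j := by
  have h : (sumNotMemRangeEquiv ht).symm (t j) = .inl j :=
    (Equiv.symm_apply_eq _).2 rfl
  simp [routingOfEquiv, Trans.trans, h]

theorem routingOfEquiv_inl (x : {x // x ∉ Set.range t}) :
    routingOfEquiv hs ht f (.inl x.1) = .inl (f x).1 := by
  simp [routingOfEquiv, Trans.trans, sumNotMemRangeEquiv]

end RoutingOfEquiv

theorem isRouting_routingOfEquiv (hs : Injective s) (ht : Injective t)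
    {f : {x // x ∉ Set.range t} ≃ {y // y ∉ Set.range s}} (hf : ∀ x, r x.1 (f x).1) :
    IsRouting r s t (routingOfEquiv hs ht f) := by
  rintro (x | i)
  · by_cases hx : x ∈ Set.range t
    · obtain ⟨j, rfl⟩ := hx
      rw [routingOfEquiv_sink]
      rfl
    · rw [routingOfEquiv_inl hs ht f ⟨x, hx⟩]
      exact hf ⟨x, hx⟩
  · rw [routingOfEquiv_inr]
    rfl

theorem card_isRouting_eq_card_equiv (hs : Injective s) (ht : Injective t) :
    Nat.card {τ // IsRouting r s t τ} =
      Nat.card {f : {x // x ∉ Set.range t} ≃ {y // y ∉ Set.range s} // ∀ x, r x.1 (f x).1} := by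
  refine (Nat.card_eq_of_bijective (fun f => (⟨routingOfEquiv hs ht f.1,
    isRouting_routingOfEquiv hs ht f.2⟩ : {τ // IsRouting r s t τ})) ⟨fun f g hfg => ?_, ?_⟩).symm
  · ext x
    have h := congrArg (fun τ : {τ // IsRouting r s t τ} => τ.1 (.inl x.1)) hfg
    simpa only [routingOfEquiv_inl, Sum.inl.injEq] using h
  · rintro ⟨τ, hτ⟩
    obtain ⟨f, hf⟩ := hτ.exists_equiv
    refine ⟨⟨f, fun x => hτ.rel_of_apply_inl (hf x)⟩, Subtype.ext (Equiv.ext ?_)⟩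
    rintro (x | i)
    · by_cases hx : x ∈ Set.range t
      · obtain ⟨j, rfl⟩ := hx
        rw [routingOfEquiv_sink, hτ.apply_sink]
      · rw [routingOfEquiv_inl hs ht f ⟨x, hx⟩, ← hf]
    · rw [routingOfEquiv_inr, hτ.apply_inr]

theorem IsBipartiteLabelling.pmCount_sdiff_image {α : Type*} [DecidableEq α] {G : SimpleGraph α}
    {S : Finset α} [Fintype I] {row col : X → α}
    (h : IsBipartiteLabelling G S row col) (hs : Injective s) (ht : Injective t) :
    pmCount G (S \ (Finset.univ.image (col ∘ s) ∪ Finset.univ.image (row ∘ t))) =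
      Nat.card {τ // IsRouting (fun x y => G.Adj (row x) (col y)) s t τ} := by
  rw [(h.sdiff_image s t).pmCount_eq_card_equiv, card_isRouting_eq_card_equiv hs ht]

end Routings

section Determinant

theorem card_cycleFactorsFinset_eq_card {Y I : Type*} [Fintype Y] [DecidableEq Y] [Fintype I]
    {τ : Perm Y} {f : I → Y} (hf : ∀ i, f i ∈ τ.support)
    (hinj : ∀ i j, τ.SameCycle (f i) (f j) → i = j)
    (hsurj : ∀ y ∈ τ.support, ∃ i, τ.SameCycle y (f i)) :
    τ.cycleFactorsFinset.card = Fintype.card I := by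
  refine (Finset.card_bij (fun i _ => τ.cycleOf (f i)) ?_ ?_ ?_).symm
  · exact fun i _ => Perm.cycleOf_mem_cycleFactorsFinset_iff.2 (hf i)
  · exact fun i _ j _ h =>
      hinj i j ((Perm.sameCycle_iff_cycleOf_eq_of_mem_support (hf i) (hf j)).2 h)
  · intro c hc
    obtain ⟨y, hy⟩ := (Perm.mem_cycleFactorsFinset_iff.1 hc).1.nonempty_support
    obtain ⟨i, hi⟩ := hsurj y (Perm.mem_cycleFactorsFinset_support_le hc hy)
    exact ⟨i, Finset.mem_univ i, by rw [Perm.cycle_is_cycleOf hy hc, hi.cycleOf_eq]⟩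

theorem sign_eq_neg_one_pow_card_support_add {Y : Type*} [Fintype Y] [DecidableEq Y]
    (τ : Perm Y) : Perm.sign τ = (-1) ^ (τ.support.card + τ.cycleFactorsFinset.card) := by
  rw [Perm.sign_of_cycleType, Perm.sum_cycleType, Perm.cycleType_def, Multiset.card_map,
    Finset.card_val]

variable {X I : Type*} {r : X → X → Prop} {s t : I → X}

/-- The only permutation following the arrows of `r` is the identity. For a reflexive relation on a
finite type this means that `r` has no cycles apart from loops. -/
def IsRigid (r : X → X → Prop) : Prop :=
  ∀ c : Perm X, (∀ x, r x (c x)) → c = 1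

/-- Distinct extra points lie on distinct cycles of `τ`. For routings this means that each path
joins a source to the sink of the same index, which fixes the sign of `τ`. -/
def IsUnlinked (τ : Perm (X ⊕ I)) : Prop :=
  ∀ i j, τ.SameCycle (.inr i) (.inr j) → i = j

theorem IsRouting.exists_sameCycle_inr [Finite X] [Finite I] {τ : Perm (X ⊕ I)}
    (hτ : IsRouting r s t τ) (hr : IsRigid r) (hrefl : ∀ x, r x x) {z : X ⊕ I} (hz : τ z ≠ z) :
    ∃ i, τ.SameCycle z (.inr i) := by
  classical
  by_contra! hno
  obtain x₀ | i := z
  swap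
  · exact hno i (.refl _ _)
  have hmaps : Set.MapsTo (τ.cycleOf (.inl x₀)) (Set.range .inl) (Set.range .inl) := by
    rintro _ ⟨x, rfl⟩
    rw [Perm.cycleOf_apply]
    split_ifs with h
    · cases hx : τ (.inl x) with
      | inl y => exact ⟨y, rfl⟩
      | inr j => exact absurd (hx ▸ Perm.sameCycle_apply_right.2 h) (hno j)
    · exact ⟨x, rfl⟩
  obtain ⟨⟨c, d⟩, hcd⟩ := Perm.mem_sumCongrHom_range_of_perm_mapsTo_inl hmaps
  have hc_apply (x : X) : τ.cycleOf (.inl x₀) (.inl x) = .inl (c x) := by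
    rw [← hcd]
    rfl
  have hc : c = 1 := by
    refine hr c fun x => ?_
    have hx := hc_apply x
    rw [Perm.cycleOf_apply] at hx
    split_ifs at hx
    · exact hτ.rel_of_apply_inl hx
    · rw [← Sum.inl.inj hx]
      exact hrefl x
  exact hz (by simpa [hc] using hc_apply x₀)

theorem IsRouting.sign_eq [Fintype X] [Fintype I] [DecidableEq X] [DecidableEq I]
    {τ : Perm (X ⊕ I)} (hτ : IsRouting r s t τ) (hr : IsRigid r) (hrefl : ∀ x, r x x)
    (hunl : IsUnlinked τ) : Perm.sign τ = (-1) ^ (τ.support.card + Fintype.card I) := by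
  rw [sign_eq_neg_one_pow_card_support_add,
    card_cycleFactorsFinset_eq_card (fun i => by simp [hτ.apply_inr]) hunl
      fun z hz => hτ.exists_sameCycle_inr hr hrefl (Perm.mem_support.1 hz)]

section Matrices

variable [DecidableEq X] [DecidableRel r]

/-- The arrow matrix of a reflexive relation: `1` on the diagonal and `-1` at the other arrows. For
a rigid relation on a finite type, the entries of its inverse count `r`-paths. -/
def arrowMatrix (r : X → X → Prop) [DecidableRel r] : Matrix X X ℤ :=
  .of fun x y => if y = x then 1 else if r x y then -1 else 0

/-- The arrow matrix bordered by the indicator columns of the sinks and the negated indicator rows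
of the sources. Its determinant is a signed count of routings. -/
def borderedMatrix (r : X → X → Prop) [DecidableRel r] (s t : I → X) :
    Matrix (X ⊕ I) (X ⊕ I) ℤ :=
  .fromBlocks (arrowMatrix r) (.of fun x j => if x = t j then 1 else 0)
    (.of fun i y => if y = s i then -1 else 0) 0

theorem rel_of_arrowMatrix_ne_zero (hrefl : ∀ x, r x x) {x y : X} (h : arrowMatrix r x y ≠ 0) :
    r x y := by
  by_contra hxy
  have hne : y ≠ x := fun hyx => hxy (hyx ▸ hrefl x)
  exact h (by simp [arrowMatrix, hne, hxy])

theorem routingStep_of_borderedMatrix_ne_zero (hrefl : ∀ x, r x x) {z w : X ⊕ I}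
    (h : borderedMatrix r s t z w ≠ 0) : RoutingStep r s t z w := by
  rcases z with x | i <;> rcases w with y | j
  · exact rel_of_arrowMatrix_ne_zero hrefl h
  all_goals simp_all [borderedMatrix, RoutingStep]

theorem borderedMatrix_of_routingStep [DecidableEq I] {z w : X ⊕ I} (h : RoutingStep r s t z w) :
    borderedMatrix r s t z w = (if w ≠ z then -1 else 1) * (if w.isRight then -1 else 1) := by
  rcases z with x | i <;> rcases w with y | j <;> simp only [RoutingStep] at h
  · by_cases hyx : y = x <;> simp [borderedMatrix, arrowMatrix, hyx, h]
  all_goals simp [borderedMatrix, h]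

variable [Fintype X]

theorem det_arrowMatrix (hr : IsRigid r) (hrefl : ∀ x, r x x) : (arrowMatrix r).det = 1 := by
  rw [← Matrix.det_transpose, Matrix.det_apply, Finset.sum_eq_single 1]
  · simp [arrowMatrix]
  · intro c _ hc
    have hstep : ∃ x, ¬ r x (c x) := by
      by_contra! h
      exact hc (hr c h)
    obtain ⟨x, hx⟩ := hstep
    have hentry : arrowMatrix r x (c x) = 0 := by
      by_contra h
      exact hx (rel_of_arrowMatrix_ne_zero hrefl h)
    rw [Finset.prod_eq_zero (Finset.mem_univ x) hentry, smul_zero]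
  · simp

variable [Fintype I] [DecidableEq I]

theorem IsRouting.prod_borderedMatrix {τ : Perm (X ⊕ I)} (hτ : IsRouting r s t τ) :
    ∏ z, borderedMatrix r s t z (τ z) = (-1) ^ (τ.support.card + Fintype.card I) := by
  have hmoved : ∏ z, (if τ z ≠ z then (-1 : ℤ) else 1) = (-1) ^ τ.support.card := by
    simp [Finset.prod_ite, Perm.support]
  have hright : ∏ z, (if (τ z).isRight then (-1 : ℤ) else 1) = (-1) ^ Fintype.card I := by
    rw [Equiv.prod_comp τ fun w => if w.isRight then (-1 : ℤ) else 1, Fintype.prod_sum_type]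
    simp
  rw [Finset.prod_congr rfl fun z _ => borderedMatrix_of_routingStep (hτ z),
    Finset.prod_mul_distrib, hmoved, hright, pow_add]

theorem det_borderedMatrix_eq_card (hr : IsRigid r) (hrefl : ∀ x, r x x)
    (hunl : ∀ τ, IsRouting r s t τ → IsUnlinked τ) :
    (borderedMatrix r s t).det = Nat.card {τ // IsRouting r s t τ} := by
  classical
  rw [← Matrix.det_transpose, Matrix.det_apply', Nat.card_eq_fintype_card, Fintype.card_subtype,
    Finset.card_filter, Nat.cast_sum]
  refine Finset.sum_congr rfl fun τ _ => ?_
  simp only [Matrix.transpose_apply]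
  split_ifs with hτ
  · rw [hτ.prod_borderedMatrix, hτ.sign_eq hr hrefl (hunl τ hτ)]
    simp [← mul_pow]
  · obtain ⟨z, hz⟩ := not_forall.1 hτ
    have hentry : borderedMatrix r s t z (τ z) = 0 := by
      by_contra h
      exact hz (routingStep_of_borderedMatrix_ne_zero hrefl h)
    rw [Finset.prod_eq_zero (Finset.mem_univ z) hentry, mul_zero, Nat.cast_zero]

theorem det_borderedMatrix_eq_det_inv (hdet : (arrowMatrix r).det = 1) :
    (borderedMatrix r s t).det = (Matrix.of fun i j => (arrowMatrix r)⁻¹ (s i) (t j)).det := by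
  have : Invertible (arrowMatrix r) := Matrix.invertibleOfIsUnitDet _ (hdet ▸ isUnit_one)
  rw [borderedMatrix, Matrix.det_fromBlocks₁₁, hdet, one_mul, Matrix.invOf_eq_nonsing_inv]
  congr 1
  ext i j
  simp [Matrix.mul_apply]

theorem inv_arrowMatrix_apply (hr : IsRigid r) (hrefl : ∀ x, r x x) (x y : X) :
    (arrowMatrix r)⁻¹ x y =
      Nat.card {τ // IsRouting r (fun _ : Unit => x) (fun _ : Unit => y) τ} := by
  rw [← det_borderedMatrix_eq_card hr hrefl fun _ _ _ _ _ => rfl,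
    det_borderedMatrix_eq_det_inv (det_arrowMatrix hr hrefl), Matrix.det_unique, Matrix.of_apply]

end Matrices

theorem card_isRouting_eq_det [Finite X] [Fintype I] [DecidableEq I] (hr : IsRigid r)
    (hrefl : ∀ x, r x x) (hunl : ∀ τ, IsRouting r s t τ → IsUnlinked τ) :
    (Nat.card {τ // IsRouting r s t τ} : ℤ) = (Matrix.of fun i j : I =>
      (Nat.card {τ // IsRouting r (fun _ : Unit => s i) (fun _ : Unit => t j) τ} : ℤ)).det := by
  classical
  have := Fintype.ofFinite X
  simp only [← det_borderedMatrix_eq_card hr hrefl hunl, ← inv_arrowMatrix_apply hr hrefl,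
    det_borderedMatrix_eq_det_inv (det_arrowMatrix hr hrefl)]

end Determinant

section Arcs

variable {X I : Type*}

/-- `IsOnArc τ i z` says that `z` is visited by the orbit of the extra point `i` under `τ`, after
its start and no later than its first return to an extra point. In particular `IsOnArc τ i (inr j)`
says that this first return is to `j`. -/
inductive IsOnArc (τ : Perm (X ⊕ I)) (i : I) : X ⊕ I → Prop
  | head {z : X ⊕ I} : τ (.inr i) = z → IsOnArc τ i z
  | tail {x : X} {z : X ⊕ I} : IsOnArc τ i (.inl x) → τ (.inl x) = z → IsOnArc τ i z

namespace IsOnArc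

variable {τ : Perm (X ⊕ I)} {i k : I} {z : X ⊕ I}

theorem index_unique (hi : IsOnArc τ i z) (hk : IsOnArc τ k z) : i = k := by
  induction hi with
  | head hz =>
    cases hk with
    | head hz' => exact Sum.inr.inj (τ.injective (hz.trans hz'.symm))
    | tail _ hz' => cases τ.injective (hz.trans hz'.symm)
  | tail _ hz ih =>
    cases hk with
    | head hz' => cases τ.injective (hz.trans hz'.symm)
    | tail hx hz' =>
      cases τ.injective (hz.trans hz'.symm)
      exact ih hx

theorem exists_inr [Finite X] [Finite I] (τ : Perm (X ⊕ I)) (i : I) :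
    ∃ j, IsOnArc τ i (.inr j) := by
  by_contra! hno
  have hpow (m : ℕ) : IsOnArc τ i ((τ ^ (m + 1)) (.inr i)) := by
    induction m with
    | zero => exact .head (by simp)
    | succ m ih =>
      rw [pow_succ', Perm.mul_apply]
      cases h : (τ ^ (m + 1)) (.inr i) with
      | inl x => exact .tail (h ▸ ih) rfl
      | inr j => exact absurd (h ▸ ih) (hno j)
  have hreturn := hpow (orderOf τ - 1)
  rw [Nat.sub_add_cancel (orderOf_pos τ), pow_orderOf_eq_one] at hreturn
  exact hno i hreturn

theorem exists_firstReturn_perm [Finite X] [Finite I] (τ : Perm (X ⊕ I)) :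
    ∃ σ : Perm I, ∀ i j, IsOnArc τ i (.inr j) ↔ σ i = j := by
  choose σ hσ using exists_inr τ
  have hinj : Injective σ := fun i k h => (hσ i).index_unique (h ▸ hσ k)
  refine ⟨.ofBijective σ (Finite.injective_iff_bijective.1 hinj), fun i j => ⟨fun hij => ?_, ?_⟩⟩
  · obtain ⟨k, rfl⟩ := Finite.injective_iff_surjective.1 hinj j
    rw [hij.index_unique (hσ k)]
    rfl
  · rintro rfl
    exact hσ i

end IsOnArc

theorem isUnlinked_of_isOnArc_self [Finite X] [Finite I] {τ : Perm (X ⊕ I)}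
    (h : ∀ i, IsOnArc τ i (.inr i)) : IsUnlinked τ := by
  intro i j hij
  have hpow (m : ℕ) : IsOnArc τ i ((τ ^ m) (.inr i)) := by
    induction m with
    | zero => exact h i
    | succ m ih =>
      rw [pow_succ', Perm.mul_apply]
      cases hz : (τ ^ m) (.inr i) with
      | inl x => exact .tail (hz ▸ ih) rfl
      | inr k =>
        obtain rfl := (hz ▸ ih : IsOnArc τ i (.inr k)).index_unique (h k)
        exact .head rfl
  obtain ⟨m, hm⟩ := hij.exists_nat_pow_eq
  exact (hm ▸ hpow m).index_unique (h j)

variable {α : Type*} {row col : X → α}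

/-- The ends `row x` and `col x` of all the edges `x` on the arc of `τ` starting at `i`. -/
def arcVertices (row col : X → α) (τ : Perm (X ⊕ I)) (i : I) : Set α :=
  {v | ∃ x, IsOnArc τ i (.inl x) ∧ (v = row x ∨ v = col x)}

theorem IsRouting.exists_walk {G : SimpleGraph α} {s t : I → X} {τ : Perm (X ⊕ I)}
    (hτ : IsRouting (fun x y => G.Adj (row x) (col y)) s t τ)
    (hdiag : ∀ x, G.Adj (row x) (col x)) {i : I} {x : X} (hx : IsOnArc τ i (.inl x)) :
    ∃ w : G.Walk (col (s i)) (row x), ∀ v ∈ w.support, v ∈ arcVertices row col τ i := by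
  generalize hz : Sum.inl x = z at hx
  induction hx generalizing x with
  | head h =>
    obtain rfl : s i = x := Sum.inl.inj ((hτ.apply_inr i).symm.trans (h.trans hz.symm))
    refine ⟨(hdiag (s i)).symm.toWalk, fun v hv => ⟨s i, .head (h.trans hz.symm), ?_⟩⟩
    simpa [or_comm] using hv
  | @tail y _ hy h ih =>
    subst hz
    obtain ⟨w, hw⟩ := ih rfl
    refine ⟨(w.concat (hτ.rel_of_apply_inl h)).concat (hdiag x).symm, fun v hv => ?_⟩
    simp only [SimpleGraph.Walk.support_concat, List.mem_append, List.mem_singleton] at hv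
    rcases hv with (hv | hv) | hv
    · exact hw v hv
    · exact ⟨x, hy.tail h, .inr hv⟩
    · exact ⟨x, hy.tail h, .inl hv⟩

namespace IsBipartiteLabelling

variable {G : SimpleGraph α} {S : Finset α} {s t : I → X} {τ : Perm (X ⊕ I)} {i j k l : I}

theorem disjoint_arcVertices (h : IsBipartiteLabelling G S row col) (hik : i ≠ k) :
    Disjoint (arcVertices row col τ i) (arcVertices row col τ k) := by
  rw [Set.disjoint_left]
  rintro v ⟨x, hx, hvx⟩ ⟨y, hy, hvy⟩
  have hxy : x = y := by
    rcases hvx with rfl | rfl <;> rcases hvy with hv | hv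
    · exact h.row_injective hv
    · exact absurd hv (h.row_ne_col x y)
    · exact absurd hv.symm (h.row_ne_col y x)
    · exact h.col_injective hv
  subst hxy
  exact hik (hx.index_unique hy)

theorem eq_of_source_mem_arcVertices (h : IsBipartiteLabelling G S row col) {r : X → X → Prop}
    (hτ : IsRouting r s t τ) (hk : col (s k) ∈ arcVertices row col τ i) : k = i := by
  obtain ⟨x, hx, hkx | hkx⟩ := hk
  · exact absurd hkx.symm (h.row_ne_col x (s k))
  · obtain rfl := h.col_injective hkx
    exact (IsOnArc.head (hτ.apply_inr k)).index_unique hx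

theorem isOnArc_of_sink_mem_arcVertices (h : IsBipartiteLabelling G S row col)
    {r : X → X → Prop} (hτ : IsRouting r s t τ) (hj : row (t j) ∈ arcVertices row col τ i) :
    IsOnArc τ i (.inr j) := by
  obtain ⟨x, hx, hjx | hjx⟩ := hj
  · obtain rfl := h.row_injective hjx
    exact hx.tail (hτ.apply_sink j)
  · exact absurd hjx (h.row_ne_col (t j) x)

theorem exists_path_of_isOnArc [Finite I] (h : IsBipartiteLabelling G S row col)
    (hdiag : ∀ x, G.Adj (row x) (col x))
    (hτ : IsRouting (fun x y => G.Adj (row x) (col y)) s t τ) (hij : IsOnArc τ i (.inr j)) :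
    ∃ w : G.Walk (col (s i)) (row (t j)), w.IsPath ∧
      (∀ v ∈ w.support, v ∈ arcVertices row col τ i) ∧
      ∀ v ∈ w.support, v ≠ col (s i) → v ≠ row (t j) →
        v ∉ Set.range (col ∘ s) ∪ Set.range (row ∘ t) := by
  classical
  have := h.finite_rowLabels
  obtain ⟨σ, hσ⟩ := IsOnArc.exists_firstReturn_perm τ
  have hsink : IsOnArc τ i (.inl (t j)) := by
    cases hij with
    | head h => cases (hτ.apply_inr i).symm.trans h
    | tail hx h => exact hτ.eq_sink_of_apply_inl h ▸ hx
  obtain ⟨w, hw⟩ := hτ.exists_walk hdiag hsink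
  have hbypass : ∀ v ∈ w.bypass.support, v ∈ arcVertices row col τ i :=
    fun v hv => hw v (w.support_bypass_subset_support hv)
  refine ⟨w.bypass, w.bypass_isPath, hbypass, fun v hv hvi hvj => ?_⟩
  rintro (⟨k, rfl⟩ | ⟨l, rfl⟩)
  · exact hvi (by rw [← h.eq_of_source_mem_arcVertices hτ (hbypass _ hv), comp_apply])
  · have hil := h.isOnArc_of_sink_mem_arcVertices hτ (hbypass _ hv)
    exact hvj (by rw [← (hσ i j).1 hij, (hσ i l).1 hil, comp_apply])

theorem disjointPaths_of_isOnArc [Finite I] (h : IsBipartiteLabelling G S row col)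
    (hdiag : ∀ x, G.Adj (row x) (col x))
    (hτ : IsRouting (fun x y => G.Adj (row x) (col y)) s t τ) (hik : i ≠ k)
    (hij : IsOnArc τ i (.inr j)) (hkl : IsOnArc τ k (.inr l)) :
    DisjointPaths G (Set.range (col ∘ s) ∪ Set.range (row ∘ t))
      (col (s i)) (row (t j)) (col (s k)) (row (t l)) := by
  obtain ⟨p, hp, hpi, hp_avoid⟩ := h.exists_path_of_isOnArc hdiag hτ hij
  obtain ⟨q, hq, hqk, hq_avoid⟩ := h.exists_path_of_isOnArc hdiag hτ hkl
  exact ⟨p, q, hp, hq, fun v hvp hvq =>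
    Set.disjoint_left.1 (h.disjoint_arcVertices hik) (hpi v hvp) (hqk v hvq), hp_avoid, hq_avoid⟩

end IsBipartiteLabelling

end Arcs

section Noncrossing

variable {α : Type*} {G : SimpleGraph α} {n : ℕ}

theorem NoncrossingList.not_disjointPaths {a b : Fin n → α}
    (hnc : NoncrossingList G (List.ofFn a ++ (List.ofFn b).reverse)) {i j k l : Fin n}
    (hik : i < k) (hlj : l < j) :
    ¬ DisjointPaths G (Set.range a ∪ Set.range b) (a i) (b j) (a k) (b l) := by
  set L := List.ofFn a ++ (List.ofFn b).reverse with hL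
  have hlen : L.length = n + n := by simp [hL]
  have hset : {v | v ∈ L} = Set.range a ∪ Set.range b := by
    ext v
    simp [hL]
  have hget_left (i : Fin n) : L.get ⟨i, by omega⟩ = a i := by
    simp [hL]
  have hget_right (j : Fin n) : L.get ⟨n + (n - 1 - j), by omega⟩ = b j := by
    have hj : n - 1 - (n - 1 - (j : ℕ)) = j := by omega
    simp [hL, hj]
  have h := hnc ⟨i, by omega⟩ ⟨k, by omega⟩ ⟨n + (n - 1 - j), by omega⟩
    ⟨n + (n - 1 - l), by omega⟩ hik (Fin.mk_lt_mk.2 (by omega)) (Fin.mk_lt_mk.2 (by omega))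
  rwa [hset, hget_left, hget_left, hget_right, hget_right] at h

namespace IsBipartiteLabelling

variable {X : Type*} {S : Finset α} {row col : X → α} {s t : Fin n → X}

theorem isUnlinked_of_noncrossing (h : IsBipartiteLabelling G S row col)
    (hdiag : ∀ x, G.Adj (row x) (col x))
    (hnc : NoncrossingList G (List.ofFn (col ∘ s) ++ (List.ofFn (row ∘ t)).reverse))
    {τ : Perm (X ⊕ Fin n)} (hτ : IsRouting (fun x y => G.Adj (row x) (col y)) s t τ) :
    IsUnlinked τ := by
  have := h.finite_rowLabels
  obtain ⟨σ, hσ⟩ := IsOnArc.exists_firstReturn_perm τ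
  have hmono : StrictMono σ := by
    intro i k hik
    by_contra! hle
    have hlt : σ k < σ i := hle.lt_of_ne (σ.injective.ne hik.ne')
    exact hnc.not_disjointPaths hik hlt
      (h.disjointPaths_of_isOnArc hdiag hτ hik.ne ((hσ i _).2 rfl) ((hσ k _).2 rfl))
  have hid : ⇑σ = id := (hmono.range_inj strictMono_id).1 (by simp)
  exact isUnlinked_of_isOnArc_self fun i => (hσ i i).2 (congrFun hid i)

theorem isRigid_adj (h : IsBipartiteLabelling G S row col) (hdiag : ∀ x, G.Adj (row x) (col x))
    (hcard : pmCount G S = 1) : IsRigid fun x y => G.Adj (row x) (col y) := by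
  intro c hc
  rw [h.pmCount_eq_card_equiv, Nat.card_eq_one_iff_unique] at hcard
  have := hcard.1
  exact congrArg Subtype.val (Subsingleton.elim
    (⟨c, hc⟩ : {f : X ≃ X // ∀ x, G.Adj (row x) (col (f x))}) ⟨1, hdiag⟩)

theorem pmCount_eq_det [DecidableEq α] (h : IsBipartiteLabelling G S row col)
    (hdiag : ∀ x, G.Adj (row x) (col x)) (hcard : pmCount G S = 1)
    (hs : Injective s) (ht : Injective t)
    (hnc : NoncrossingList G (List.ofFn (col ∘ s) ++ (List.ofFn (row ∘ t)).reverse)) :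
    (pmCount G (S \ (Finset.univ.image (col ∘ s) ∪ Finset.univ.image (row ∘ t))) : ℤ) =
      (Matrix.of fun i j => (pmCount G (S \ {col (s i), row (t j)}) : ℤ)).det := by
  have := h.finite_rowLabels
  rw [h.pmCount_sdiff_image hs ht, card_isRouting_eq_det (h.isRigid_adj hdiag hcard) hdiag
    fun τ hτ => h.isUnlinked_of_noncrossing hdiag hnc hτ]
  congr! 4 with i j
  rw [← h.pmCount_sdiff_image (injective_of_subsingleton _) (injective_of_subsingleton _)]
  congr 2

end IsBipartiteLabelling

theorem IsBipartition.isBipartiteLabelling [Fintype α] [DecidableEq α] {U V : Finset α}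
    (h : IsBipartition G U V) :
    IsBipartiteLabelling G Finset.univ (Subtype.val : U → α) (Subtype.val : V → α) := by
  obtain ⟨hdisj, hcover, hadj⟩ := h
  refine ⟨Subtype.val_injective, Subtype.val_injective, fun u v huv => ?_, fun v => ?_,
    fun u u' huu' => ?_, fun v v' hvv' => ?_⟩
  · exact Finset.disjoint_left.1 hdisj u.2 (huv ▸ v.2)
  · simp [← hcover]
  · rcases hadj huu' with ⟨-, h⟩ | ⟨h, -⟩
    exacts [Finset.disjoint_left.1 hdisj u'.2 h, Finset.disjoint_left.1 hdisj u.2 h]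
  · rcases hadj hvv' with ⟨h, -⟩ | ⟨-, h⟩
    exacts [Finset.disjoint_left.1 hdisj h v.2, Finset.disjoint_left.1 hdisj h v'.2]

end Noncrossing

/-- (Corollary 4.3.) Determinant condensation with `A ⊆ V`, `B ⊆ U`. -/
theorem determinant_condensation_M_K {α : Type*} [Fintype α] [DecidableEq α]
    (G : SimpleGraph α) (U V : Finset α) (hbip : IsBipartition G U V) (n : ℕ)
    (a b : Fin n → α)
    (hdist : (List.ofFn a ++ (List.ofFn b).reverse).Nodup)
    (hnc : NoncrossingList G (List.ofFn a ++ (List.ofFn b).reverse))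
    (A B : Finset α) (hA : A = Finset.univ.image a) (hB : B = Finset.univ.image b)
    (hAV : A ⊆ V) (hBU : B ⊆ U)
    (huniq : ∃! m : Finset (Sym2 α), IsPMOn G Finset.univ m) :
    (pmCount G (Finset.univ \ (A ∪ B)) : ℤ) =
      Matrix.det (Matrix.of fun i j : Fin n =>
        (pmCount G (Finset.univ \ {a i, b j}) : ℤ)) := by
  have hlabel := hbip.isBipartiteLabelling
  obtain ⟨m, hm⟩ := huniq.exists
  obtain ⟨f, hf, -⟩ := hlabel.exists_matchingOfEquiv_eq hm
  subst hA hB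
  obtain ⟨s, rfl⟩ : ∃ s : Fin n → U, (Subtype.val ∘ f) ∘ s = a :=
    ⟨fun i => f.symm ⟨a i, hAV (by simp)⟩, by ext i; simp⟩
  obtain ⟨t, rfl⟩ : ∃ t : Fin n → U, Subtype.val ∘ t = b :=
    ⟨fun j => ⟨b j, hBU (by simp)⟩, rfl⟩
  obtain ⟨hinj_a, hinj_b, -⟩ := List.nodup_append.1 hdist
  rw [List.nodup_ofFn] at hinj_a
  rw [List.nodup_reverse, List.nodup_ofFn] at hinj_b
  exact (hlabel.comp_col f).pmCount_eq_det hf (pmCount_eq_one_iff.2 huniq) hinj_a.of_comp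
    hinj_b.of_comp hnc
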